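/- For all integers K and t with K > t > 1, s(C(K, t), K, C(K−1, t−1)) = C(K, t+1) = C(K, t)·(K − t)/(t + 1). -/

import Mathlib

open scoped Classical

/-- A placement delivery array with parameters `(F, K, Z)` over alphabet `S`:
an `F × K` array of cells that are either empty (`none`) or an element of `S`,
such that each column has exactly `Z` empty cells, no element occurs twice in a
row or in a column, and two equal entries in positions `(j₁,k₁)`, `(j₂,k₂)`
force the cells `(j₁,k₂)` and `(j₂,k₁)` to be empty. -/
def IsPDA {S : Type} (F K Z : ℕ) (A : Fin F → Fin K → Option S) : Prop :=
  (∀ k : Fin K, (Finset.univ.filter fun j : Fin F => A j k = none).card = Z) ∧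
  (∀ (j : Fin F) (k₁ k₂ : Fin K) (t : S), A j k₁ = some t → A j k₂ = some t → k₁ = k₂) ∧
  (∀ (j₁ j₂ : Fin F) (k : Fin K) (t : S), A j₁ k = some t → A j₂ k = some t → j₁ = j₂) ∧
  (∀ (j₁ j₂ : Fin F) (k₁ k₂ : Fin K) (t : S), j₁ ≠ j₂ → k₁ ≠ k₂ →
      A j₁ k₁ = some t → A j₂ k₂ = some t → A j₁ k₂ = none ∧ A j₂ k₁ = none)

/-- `sPDA F K Z` is the minimum size of an alphabet `S` for which an `S`-PDA with
parameters `(F, K, Z)` exists. -/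
noncomputable def sPDA (F K Z : ℕ) : ℕ :=
  sInf {n : ℕ | ∃ A : Fin F → Fin K → Option (Fin n), IsPDA F K Z A}

/-!
Suppose a symbol `s` occurs `r` times. Any row containing `s` is empty in each of the `r - 1` other
columns where `s` occurs, so `r ≤ e + 1`, where `e` is the number of empty cells of that row. Give
each nonempty cell the weight `1 / (e + 1)`, `e` being taken in its own row: the cells of one symbol
have total weight at most `1`, so `∑ j, (K - e j) / (e j + 1) ≤ |S|`. Since `∑ j, e j = K * Z`,
the Cauchy–Schwarz inequality bounds the left side below by its value when all `e j` are equal, and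
for `F = C(K, t)`, `Z = C(K - 1, t - 1)`, where the common value is `t`, this is `C(K, t + 1)`.
The array of Maddah-Ali and Niesen, whose rows are the `t`-subsets `T` of the columns and whose cell
`(T, k)` is `T ∪ {k}` if `k ∉ T`, attains the bound.
-/

section LowerBound

open Finset

variable {S : Type} {F K Z : ℕ} {A : Fin F → Fin K → Option S}

/-- The columns in which row `j` of the array `A` is empty; their number `e` sets the weight
`1 / (e + 1)` of the nonempty cells of the row. -/
def emptyColumns (A : Fin F → Fin K → Option S) (j : Fin F) : Finset (Fin K) :=
  {k | A j k = none}

/-- The cells `(j, k)` of the array `A` that contain the symbol `s`; as `s` varies, these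
classes partition the nonempty cells. -/
noncomputable def occurrences (A : Fin F → Fin K → Option S) (s : S) : Finset (Fin F × Fin K) :=
  {c | A c.1 c.2 = some s}

theorem mem_emptyColumns {j : Fin F} {k : Fin K} : k ∈ emptyColumns A j ↔ A j k = none := by
  simp [emptyColumns]

theorem mem_occurrences {s : S} {c : Fin F × Fin K} :
    c ∈ occurrences A s ↔ A c.1 c.2 = some s := by
  simp [occurrences]

theorem IsPDA.card_occurrences_le (hA : IsPDA F K Z A) {s : S} {c : Fin F × Fin K}
    (hc : c ∈ occurrences A s) : #(occurrences A s) ≤ #(emptyColumns A c.1) + 1 := by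
  obtain ⟨-, eq_of_row, eq_of_column, empty_of_ne⟩ := hA
  rw [mem_occurrences] at hc
  have columns_subset :
      ∀ d ∈ occurrences A s, d.2 ∈ insert c.2 (emptyColumns A c.1) := by
    intro d hd
    rw [mem_occurrences] at hd
    rw [mem_insert, mem_emptyColumns, or_iff_not_imp_left]
    intro hcol
    by_cases hrow : c.1 = d.1
    · exact absurd (eq_of_row _ _ _ s (hrow ▸ hd) hc) hcol
    · exact (empty_of_ne _ _ _ _ s hrow (Ne.symm hcol) hc hd).1
  have columns_injOn : Set.InjOn Prod.snd (occurrences A s : Set (Fin F × Fin K)) := by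
    rintro ⟨j₁, k⟩ h₁ ⟨j₂, -⟩ h₂ rfl
    rw [mem_coe, mem_occurrences] at h₁ h₂
    exact Prod.ext (eq_of_column j₁ j₂ k s h₁ h₂) rfl
  exact (card_le_card_of_injOn _ columns_subset columns_injOn).trans (card_insert_le _ _)

theorem IsPDA.sum_card_emptyColumns (hA : IsPDA F K Z A) :
    ∑ j, #(emptyColumns A j) = K * Z :=
  calc ∑ j, #(emptyColumns A j) = ∑ k, #{j | A j k = none} :=
        sum_card_bipartiteAbove_eq_sum_card_bipartiteBelow fun j k => A j k = none
    _ = K * Z := by simp [hA.1]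

theorem sum_sum_occurrences [Fintype S] {M : Type*} [AddCommMonoid M] (w : Fin F → M) :
    ∑ s, ∑ c ∈ occurrences A s, w c.1 = ∑ j, #(emptyColumns A j)ᶜ • w j :=
  calc ∑ s, ∑ c ∈ occurrences A s, w c.1
      = ∑ j, ∑ k, ∑ s, if A j k = some s then w j else 0 := by
        simp only [occurrences, sum_filter]
        rw [sum_comm, Fintype.sum_prod_type]
    _ = ∑ j, ∑ k, if k ∈ (emptyColumns A j)ᶜ then w j else 0 := by
        refine sum_congr rfl fun j _ => sum_congr rfl fun k _ => ?_
        cases h : A j k <;> simp [mem_emptyColumns, h]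
    _ = ∑ j, #(emptyColumns A j)ᶜ • w j := by
        simp only [sum_ite_mem, univ_inter, sum_const]

theorem IsPDA.sum_occurrences_inv_le_one (hA : IsPDA F K Z A) (s : S) :
    ∑ c ∈ occurrences A s, ((#(emptyColumns A c.1) : ℚ) + 1)⁻¹ ≤ 1 :=
  calc ∑ c ∈ occurrences A s, ((#(emptyColumns A c.1) : ℚ) + 1)⁻¹
      ≤ ∑ _c ∈ occurrences A s, (#(occurrences A s) : ℚ)⁻¹ := by
        refine sum_le_sum fun c hc => inv_anti₀ ?_ (mod_cast hA.card_occurrences_le hc)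
        exact mod_cast card_pos.2 ⟨c, hc⟩
    _ = #(occurrences A s) * (#(occurrences A s) : ℚ)⁻¹ := by rw [sum_const, nsmul_eq_mul]
    _ ≤ 1 := mul_inv_le_one

theorem IsPDA.sum_div_le_card [Fintype S] (hA : IsPDA F K Z A) :
    ∑ j, (#(emptyColumns A j)ᶜ : ℚ) / (#(emptyColumns A j) + 1) ≤ Fintype.card S :=
  calc ∑ j, (#(emptyColumns A j)ᶜ : ℚ) / (#(emptyColumns A j) + 1)
      = ∑ s, ∑ c ∈ occurrences A s, ((#(emptyColumns A c.1) : ℚ) + 1)⁻¹ := by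
        simp only [sum_sum_occurrences fun j => ((#(emptyColumns A j) : ℚ) + 1)⁻¹, nsmul_eq_mul,
          div_eq_mul_inv]
    _ ≤ ∑ _s : S, 1 := sum_le_sum fun s _ => hA.sum_occurrences_inv_le_one s
    _ = Fintype.card S := by simp

theorem IsPDA.sq_div_le_sum_inv (hA : IsPDA F K Z A) :
    (F : ℚ) ^ 2 / (K * Z + F) ≤ ∑ j, ((#(emptyColumns A j) : ℚ) + 1)⁻¹ := by
  have sum_add_one : ∑ j, ((#(emptyColumns A j) : ℚ) + 1) = K * Z + F := by
    have sum_card : (∑ j, #(emptyColumns A j) : ℚ) = K * Z := mod_cast hA.sum_card_emptyColumns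
    simp [sum_add_distrib, sum_card]
  have cauchy_schwarz := sq_sum_div_le_sum_sq_div univ (fun _ : Fin F => (1 : ℚ))
    (g := fun j => (#(emptyColumns A j) : ℚ) + 1) fun _ _ => by positivity
  simpa [sum_add_one] using cauchy_schwarz

theorem add_one_mul_inv_card_emptyColumns (j : Fin F) :
    (K + 1) * ((#(emptyColumns A j) : ℚ) + 1)⁻¹ =
      #(emptyColumns A j)ᶜ / (#(emptyColumns A j) + 1) + 1 := by
  have card_add_card : (#(emptyColumns A j) : ℚ) + #(emptyColumns A j)ᶜ = K :=
    mod_cast (card_add_card_compl _).trans (Fintype.card_fin K)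
  field_simp
  linarith

-- With `t = K * Z / F` this says `|S| ≥ F * (K - t) / (t + 1)`, rearranged to avoid subtraction.
theorem IsPDA.add_one_mul_sq_le [Fintype S] (hA : IsPDA F K Z A) :
    (K + 1) * F ^ 2 ≤ (Fintype.card S + F) * (K * Z + F) := by
  rcases Nat.eq_zero_or_pos F with rfl | hF
  · simp
  have bound : (K + 1) * ((F : ℚ) ^ 2 / (K * Z + F)) ≤ Fintype.card S + F :=
    calc (K + 1) * ((F : ℚ) ^ 2 / (K * Z + F))
        ≤ (K + 1) * ∑ j, ((#(emptyColumns A j) : ℚ) + 1)⁻¹ := by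
          gcongr; exact hA.sq_div_le_sum_inv
      _ = (∑ j, (#(emptyColumns A j)ᶜ : ℚ) / (#(emptyColumns A j) + 1)) + F := by
          simp only [mul_sum, add_one_mul_inv_card_emptyColumns, sum_add_distrib, sum_const,
            card_univ, Fintype.card_fin, nsmul_eq_mul, mul_one]
      _ ≤ Fintype.card S + F := by gcongr; exact hA.sum_div_le_card
  rw [← mul_div_assoc, div_le_iff₀ (by positivity)] at bound
  exact mod_cast bound

end LowerBound

section MinimalAlphabet

variable {S S' : Type} {F K Z : ℕ} {A : Fin F → Fin K → Option S}

theorem IsPDA.map (hA : IsPDA F K Z A) {f : S → S'} (hf : f.Injective) :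
    IsPDA F K Z fun j k => (A j k).map f := by
  obtain ⟨card_empty, eq_of_row, eq_of_column, empty_of_ne⟩ := hA
  have eq_some_of_map {j₁ j₂ k₁ k₂ s'} (h₁ : (A j₁ k₁).map f = some s')
      (h₂ : (A j₂ k₂).map f = some s') : ∃ s, A j₁ k₁ = some s ∧ A j₂ k₂ = some s := by
    obtain ⟨s, hs, -⟩ := Option.map_eq_some_iff.1 h₁
    exact ⟨s, hs, by rw [← hs, Option.map_injective hf (h₂.trans h₁.symm)]⟩
  refine ⟨by simpa using card_empty, fun j k₁ k₂ s' h₁ h₂ => ?_, fun j₁ j₂ k s' h₁ h₂ => ?_,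
    fun j₁ j₂ k₁ k₂ s' hj hk h₁ h₂ => ?_⟩ <;>
  obtain ⟨s, hs₁, hs₂⟩ := eq_some_of_map h₁ h₂
  · exact eq_of_row j k₁ k₂ s hs₁ hs₂
  · exact eq_of_column j₁ j₂ k s hs₁ hs₂
  · simpa using empty_of_ne j₁ j₂ k₁ k₂ s hj hk hs₁ hs₂

theorem IsPDA.exists_fin_natCard [Finite S] (hA : IsPDA F K Z A) :
    ∃ B : Fin F → Fin K → Option (Fin (Nat.card S)), IsPDA F K Z B :=
  ⟨_, hA.map (Finite.equivFin S).injective⟩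

theorem IsPDA.sPDA_le_natCard [Finite S] (hA : IsPDA F K Z A) : sPDA F K Z ≤ Nat.card S :=
  Nat.sInf_le hA.exists_fin_natCard

theorem IsPDA.exists_fin_sPDA [Finite S] (hA : IsPDA F K Z A) :
    ∃ B : Fin F → Fin K → Option (Fin (sPDA F K Z)), IsPDA F K Z B :=
  Nat.sInf_mem (s := {n | ∃ B : Fin F → Fin K → Option (Fin n), IsPDA F K Z B})
    ⟨_, hA.exists_fin_natCard⟩

end MinimalAlphabet

section SubsetArray

variable {F K t : ℕ}

/-- The Maddah-Ali–Niesen array: rows are the `t`-subsets `T` of the set of columns, symbols are the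
`(t + 1)`-subsets, and the cell `(T, k)` is empty if `k ∈ T` and contains `T ∪ {k}` otherwise. -/
def subsetArray (K t : ℕ) (T : Set.powersetCard (Fin K) t) (k : Fin K) :
    Option (Set.powersetCard (Fin K) (t + 1)) :=
  if hk : k ∈ T.1 then none
  else some ⟨insert k T.1, by
    rw [Set.powersetCard.mem_iff, Finset.card_insert_of_notMem hk, Set.powersetCard.card_eq T]⟩

theorem subsetArray_eq_none_iff {T : Set.powersetCard (Fin K) t} {k : Fin K} :
    subsetArray K t T k = none ↔ k ∈ T.1 := by
  simp [subsetArray]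

theorem subsetArray_eq_some_iff {T : Set.powersetCard (Fin K) t} {k : Fin K}
    {U : Set.powersetCard (Fin K) (t + 1)} :
    subsetArray K t T k = some U ↔ k ∉ T.1 ∧ insert k T.1 = U.1 := by
  simp [subsetArray, Subtype.ext_iff]

theorem card_powersetCard_filter_mem {α : Type*} [Fintype α] (ht : 0 < t) (a : α) :
    ({T | a ∈ T.1} : Finset (Set.powersetCard α t)).card =
      (Fintype.card α - 1).choose (t - 1) := by
  have card_superset := Finset.card_filter_powersetCard_subset {a} Finset.univ t
    (Finset.subset_univ _) (by rwa [Finset.card_singleton])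
  rw [Finset.card_univ, Finset.card_singleton] at card_superset
  rw [← card_superset, ← Finset.card_map (Function.Embedding.subtype _)]
  congr 1
  ext T
  simp [and_comm]

theorem isPDA_subsetArray (ht : 0 < t) (e : Fin F ≃ Set.powersetCard (Fin K) t) :
    IsPDA F K ((K - 1).choose (t - 1)) fun j => subsetArray K t (e j) := by
  refine ⟨fun k => ?_, fun j k₁ k₂ U h₁ h₂ => ?_, fun j₁ j₂ k U h₁ h₂ => ?_,
    fun j₁ j₂ k₁ k₂ U _ hk h₁ h₂ => ?_⟩
  · have card_rows := card_powersetCard_filter_mem ht k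
    rw [Fintype.card_fin] at card_rows
    rw [← card_rows]
    exact Finset.card_equiv e fun j => by simp [subsetArray_eq_none_iff]
  all_goals
    obtain ⟨hk₁, hU₁⟩ := subsetArray_eq_some_iff.1 h₁
    obtain ⟨hk₂, hU₂⟩ := subsetArray_eq_some_iff.1 h₂
    have insert_eq := hU₁.trans hU₂.symm
  · exact (Finset.insert_inj hk₁).1 insert_eq
  · refine e.injective (Subtype.ext ?_)
    rw [← Finset.erase_insert hk₁, insert_eq, Finset.erase_insert hk₂]
  · rw [subsetArray_eq_none_iff, subsetArray_eq_none_iff]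
    exact ⟨Finset.mem_of_mem_insert_of_ne (insert_eq ▸ Finset.mem_insert_self _ _) hk.symm,
      Finset.mem_of_mem_insert_of_ne (insert_eq ▸ Finset.mem_insert_self _ _) hk⟩

end SubsetArray

section Choose

theorem natCard_powersetCard_fin (K t : ℕ) :
    Nat.card (Set.powersetCard (Fin K) t) = K.choose t := by
  rw [Set.powersetCard.card, Nat.card_fin]

variable {K t : ℕ}

theorem mul_choose_pred (ht : 0 < t) : K * (K - 1).choose (t - 1) = K.choose t * t := by
  obtain ⟨t, rfl⟩ := Nat.exists_eq_add_one.2 ht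
  cases K with
  | zero => simp
  | succ K => exact Nat.add_one_mul_choose_eq K t

theorem IsPDA.choose_succ_le_card {S : Type} [Fintype S] {A : Fin (K.choose t) → Fin K → Option S}
    (ht : 0 < t) (hA : IsPDA (K.choose t) K ((K - 1).choose (t - 1)) A) :
    K.choose (t + 1) ≤ Fintype.card S := by
  rcases Nat.eq_zero_or_pos (K.choose t) with hF | hF
  · rw [Nat.choose_eq_zero_iff] at hF
    simp [Nat.choose_eq_zero_of_lt (hF.trans t.lt_succ_self)]
  have bound : (K.choose t * (t + 1)) * (K.choose t + K.choose (t + 1)) ≤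
      (K.choose t * (t + 1)) * (K.choose t + Fintype.card S) :=
    calc (K.choose t * (t + 1)) * (K.choose t + K.choose (t + 1))
        = K.choose t * ((K + 1).choose (t + 1) * (t + 1)) := by
          rw [Nat.choose_succ_succ]; ring
      _ = (K + 1) * K.choose t ^ 2 := by rw [← Nat.add_one_mul_choose_eq]; ring
      _ ≤ (Fintype.card S + K.choose t) * (K * (K - 1).choose (t - 1) + K.choose t) :=
          hA.add_one_mul_sq_le
      _ = (K.choose t * (t + 1)) * (K.choose t + Fintype.card S) := by
          rw [mul_choose_pred ht]; ring
  exact Nat.le_of_add_le_add_left (Nat.le_of_mul_le_mul_left bound (by positivity))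

theorem sPDA_choose (ht : 0 < t) :
    sPDA (K.choose t) K ((K - 1).choose (t - 1)) = K.choose (t + 1) := by
  have hA := isPDA_subsetArray ht (Finite.equivFinOfCardEq (natCard_powersetCard_fin K t)).symm
  apply le_antisymm
  · rw [← natCard_powersetCard_fin K (t + 1)]
    exact hA.sPDA_le_natCard
  · obtain ⟨B, hB⟩ := hA.exists_fin_sPDA
    simpa using hB.choose_succ_le_card ht

end Choose

theorem stmt_19 (K t : ℕ) (ht : 1 < t) (hK : t < K) :
    sPDA (K.choose t) K ((K - 1).choose (t - 1)) = K.choose (t + 1) ∧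
    K.choose (t + 1) = K.choose t * (K - t) / (t + 1) := by
  refine ⟨sPDA_choose (Nat.zero_lt_of_lt ht), ?_⟩
  rw [← Nat.choose_succ_right_eq, Nat.mul_div_cancel _ t.succ_pos]
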